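/- Let R be an associative ring with 1, J a two-sided ideal of R, and k ≥ 1. Let λ'_1,…,λ'_n and α'_1,…,α'_n be units of R with (λ'_i : R) - 1 ∈ J^k and (α'_i : R) - 1 ∈ J for all i. Let N be the normal closure in Rˣ of the set of commutators {λ'_i⁻¹ α'_i⁻¹ λ'_i α'_i : i = 1,…,n}. Then every u ∈ N satisfies: (i) (u : R) - 1 ∈ J^(k+1); (ii) for each i, (u⁻¹ α'_i u : R) - (α'_i : R) ∈ J^(k+2); and (iii) for each i, (u λ'_i u⁻¹ : R) - (λ'_i : R) ∈ J^(2k+1). -/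

import Mathlib

open Pointwise

section TwoSided

variable {R : Type*} [Ring R] {J : AddSubmonoid R}

theorem AddSubmonoid.mul_mem_pow_of_left
    (hl : ∀ r : R, ∀ x ∈ J, r * x ∈ J) (m : ℕ) (r : R) {x : R} (hx : x ∈ J ^ (m + 1)) :
    r * x ∈ J ^ (m + 1) := by
  rw [pow_succ'] at hx ⊢
  refine AddSubmonoid.mul_induction_on hx (fun a ha b hb => ?_) (fun a b ha hb => ?_)
  · rw [← mul_assoc]
    exact AddSubmonoid.mul_mem_mul (hl r a ha) hb
  · rw [mul_add]
    exact add_mem ha hb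

theorem AddSubmonoid.mul_mem_pow_of_right
    (hr : ∀ r : R, ∀ x ∈ J, x * r ∈ J) (m : ℕ) (r : R) {x : R} (hx : x ∈ J ^ (m + 1)) :
    x * r ∈ J ^ (m + 1) := by
  rw [pow_succ] at hx ⊢
  refine AddSubmonoid.mul_induction_on hx (fun a ha b hb => ?_) (fun a b ha hb => ?_)
  · rw [mul_assoc]
    exact AddSubmonoid.mul_mem_mul ha (hr r b hb)
  · rw [add_mul]
    exact add_mem ha hb

theorem AddSubmonoid.neg_mem_pow_of_left
    (hl : ∀ r : R, ∀ x ∈ J, r * x ∈ J) (m : ℕ) {x : R} (hx : x ∈ J ^ (m + 1)) :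
    -x ∈ J ^ (m + 1) := by
  simpa using AddSubmonoid.mul_mem_pow_of_left hl m (-1) hx

/-- Elements congruent to `1` modulo `J ^ p` and `J ^ q` commute modulo `J ^ (p + q)`. -/
theorem AddSubmonoid.mul_sub_mul_mem_pow
    (hl : ∀ r : R, ∀ x ∈ J, r * x ∈ J) {p q m : ℕ} (hm : p + q = m + 1) {a b : R}
    (ha : a - 1 ∈ J ^ p) (hb : b - 1 ∈ J ^ q) :
    a * b - b * a ∈ J ^ (m + 1) := by
  have hab : (a - 1) * (b - 1) ∈ J ^ (m + 1) := by
    rw [← hm, pow_add]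
    exact AddSubmonoid.mul_mem_mul ha hb
  have hba : (b - 1) * (a - 1) ∈ J ^ (m + 1) := by
    rw [← hm, add_comm, pow_add]
    exact AddSubmonoid.mul_mem_mul hb ha
  have h := add_mem hab (AddSubmonoid.neg_mem_pow_of_left hl m hba)
  have e : a * b - b * a = (a - 1) * (b - 1) + -((b - 1) * (a - 1)) := by noncomm_ring
  rwa [e]

/-- The units congruent to `1` modulo the power `J ^ (m + 1)` of a two-sided ideal `J`. -/
def unitsCongruenceSubgroup
    (hl : ∀ r : R, ∀ x ∈ J, r * x ∈ J) (m : ℕ) : Subgroup Rˣ where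
  carrier := {u | (u : R) - 1 ∈ J ^ (m + 1)}
  one_mem' := by simp
  mul_mem' {u v} hu hv := by
    have h := add_mem (AddSubmonoid.mul_mem_pow_of_left hl m (u : R) hv) hu
    simpa [mul_sub] using h
  inv_mem' {u} hu := by
    have h := AddSubmonoid.mul_mem_pow_of_left hl m (-(↑u⁻¹ : R)) hu
    have e : -(↑u⁻¹ : R) * ((u : R) - 1) = (↑u⁻¹ : R) - 1 := by
      rw [neg_mul, mul_sub, Units.inv_mul, mul_one, neg_sub]
    rw [e] at h
    exact h

theorem unitsCongruenceSubgroup_normal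
    (hl : ∀ r : R, ∀ x ∈ J, r * x ∈ J) (hr : ∀ r : R, ∀ x ∈ J, x * r ∈ J) (m : ℕ) :
    (unitsCongruenceSubgroup hl m).Normal where
  conj_mem u hu g := by
    have h := AddSubmonoid.mul_mem_pow_of_right hr m (↑g⁻¹ : R)
      (AddSubmonoid.mul_mem_pow_of_left hl m (g : R) hu)
    have e : (g : R) * ((u : R) - 1) * (↑g⁻¹ : R) = ((g * u * g⁻¹ : Rˣ) : R) - 1 := by
      simp [mul_sub, sub_mul]
    rw [e] at h
    exact h

end TwoSided

/-- Ring-theoretic core of Lemma 2.2: let `J` be a two-sided ideal of a ring `R`, `k ≥ 1`,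
and let `λ'_1, …, λ'_n` and `α'_1, …, α'_n` be units with `λ'_i - 1 ∈ J^k` and
`α'_i - 1 ∈ J`. If `N` is the normal closure in `Rˣ` of the commutators
`λ'_i⁻¹ α'_i⁻¹ λ'_i α'_i`, then every `u ∈ N` satisfies
(i) `u - 1 ∈ J^(k+1)`, (ii) `u⁻¹ α'_i u - α'_i ∈ J^(k+2)`, and
(iii) `u λ'_i u⁻¹ - λ'_i ∈ J^(2k+1)`. -/
theorem normalClosure_of_commutators_estimates
    (R : Type*) [Ring R] (J : AddSubgroup R)
    (hJl : ∀ r : R, ∀ x ∈ J, r * x ∈ J) (hJr : ∀ r : R, ∀ x ∈ J, x * r ∈ J)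
    (k : ℕ) (hk : 1 ≤ k) (n : ℕ) (lam alf : Fin n → Rˣ)
    (hlam : ∀ i, ((lam i : Rˣ) : R) - 1 ∈ J.toAddSubmonoid ^ k)
    (half : ∀ i, ((alf i : Rˣ) : R) - 1 ∈ J) :
    ∀ u ∈ Subgroup.normalClosure
        {x : Rˣ | ∃ i : Fin n, x = (lam i)⁻¹ * (alf i)⁻¹ * lam i * alf i},
      (((u : Rˣ) : R) - 1 ∈ J.toAddSubmonoid ^ (k + 1)) ∧
      (∀ i : Fin n, ((u⁻¹ * alf i * u : Rˣ) : R) - ((alf i : Rˣ) : R)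
          ∈ J.toAddSubmonoid ^ (k + 2)) ∧
      (∀ i : Fin n, ((u * lam i * u⁻¹ : Rˣ) : R) - ((lam i : Rˣ) : R)
          ∈ J.toAddSubmonoid ^ (2 * k + 1)) := by
  intro u hu
  have hα : ∀ i, ((alf i : Rˣ) : R) - 1 ∈ J.toAddSubmonoid ^ 1 := fun i => by
    rw [pow_one]
    exact half i
  have := unitsCongruenceSubgroup_normal (J := J.toAddSubmonoid) hJl hJr k
  have hu₁ : (u : R) - 1 ∈ J.toAddSubmonoid ^ (k + 1) := by
    refine Subgroup.normalClosure_le_normal (N := unitsCongruenceSubgroup hJl k) ?_ hu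
    rintro _ ⟨i, rfl⟩
    have h := AddSubmonoid.mul_mem_pow_of_left hJl k (↑(lam i)⁻¹ * ↑(alf i)⁻¹ : R)
      (AddSubmonoid.mul_sub_mul_mem_pow hJl rfl (hlam i) (hα i))
    have e : (↑(lam i)⁻¹ * ↑(alf i)⁻¹ : R) * (↑(lam i) * ↑(alf i) - ↑(alf i) * ↑(lam i))
        = (((lam i)⁻¹ * (alf i)⁻¹ * lam i * alf i : Rˣ) : R) - 1 := by
      simp [mul_sub, mul_assoc]
    rw [e] at h
    exact h
  refine ⟨hu₁, fun i => ?_, fun i => ?_⟩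
  · have h := AddSubmonoid.mul_mem_pow_of_left hJl (k + 1) (↑u⁻¹ : R)
      (AddSubmonoid.mul_sub_mul_mem_pow hJl (by omega) (hα i) hu₁)
    simpa [mul_sub, mul_assoc] using h
  · have h := AddSubmonoid.mul_mem_pow_of_right hJr (2 * k) (↑u⁻¹ : R)
      (AddSubmonoid.mul_sub_mul_mem_pow hJl (by omega) hu₁ (hlam i))
    simpa [sub_mul, mul_assoc] using h
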